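/- arXiv:1302.2224 — 3 statements merged into one kernel-verified Lean document; each statement's English description precedes it below -/
import Mathlib

section
/- Third Block (microscopic boundary condition): under the sequence setting, the two-scale expansion hypothesis, the weak two-scale convergence of the derivatives to η, and assuming in addition that there is a continuously differentiable ū : [0,1] → ℝ with u⁰(x,y) = ū(x) for almost every (x,y), the function ũ¹(x,y) := u¹(x,y) − y ū'(x) is Ω¹-periodic in y and η = ū' + ∂ũ¹/∂y, in the following weak sense: for every infinitely differentiable v : ℝ × ℝ → ℝ that is 1-periodic in its second argument and vanishes whenever its first argument lies outside a compact subset of (0,1), ∫∫_{(0,1)×(−1/2,1/2)} η v dx dy = ∫∫ ū'(x) v(x,y) dx dy − ∫∫ (u¹(x,y) − y ū'(x)) (∂v/∂y)(x,y) dx dy. -/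
open Set MeasureTheory Filter

/-- Two-scale transform: `(Tu)(x,y) = u(ε(⌊x/ε⌋ + 1/2) + εy)` with `ε = 1/N`. -/
noncomputable def twoScale (N : ℕ) (u : ℝ → ℝ) (x y : ℝ) : ℝ :=
  u ((1 / (N : ℝ)) * ((⌊x / (1 / (N : ℝ))⌋ : ℝ) + 1 / 2) + (1 / (N : ℝ)) * y)

/-- The two-scale domain `(0,1) × (-1/2, 1/2)`. -/
noncomputable def twoScaleDom : Set (ℝ × ℝ) :=
  Ioo (0 : ℝ) 1 ×ˢ Ioo (-(1 / 2) : ℝ) (1 / 2)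

/-!
Write `T` for the two-scale transform, `f x = v x (1/2)` for the trace of the test function and
split `v = (v - f) + f`. Since `v - f` vanishes at `y = ±1/2`, integrating by parts in each cell
gives `∫∫ T(u') (v - f) = -N ∫∫ Tu ∂v/∂y`; as `∫∫ ū ∂v/∂y = 0`, the expansion sends this to
`-∫∫ u¹ ∂v/∂y`. For the part that does not depend on `y`, `T` preserves integrals and is
multiplicative, so `∫∫ T(u') Tf = ∫ u' f = -∫ u f' = -∫∫ Tu Tf'`. Because `Tf → f` and `Tf' → f'`
uniformly while `u` and `u'` are bounded in `L¹`, the limit of `∫∫ T(u') f` is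
`-∫ ū f' = ∫ ū' f`, and one more integration by parts in `y` rewrites
`∫ ū' f` as `∫∫ ū' v + ∫∫ y ū' ∂v/∂y`.
-/

open Topology

section General

variable {α : Type*} [MeasurableSpace α] {μ : Measure α}

theorem integral_abs_le_of_integral_sq_le [IsProbabilityMeasure μ] {f : α → ℝ}
    (hf : MemLp f 2 μ) {C : ℝ} (hC : 0 ≤ C) (h : ∫ x, f x ^ 2 ∂μ ≤ C ^ 2) :
    ∫ x, |f x| ∂μ ≤ C := by
  have hvar := ProbabilityTheory.variance_eq_sub hf.abs
  have hnonneg := ProbabilityTheory.variance_nonneg |f| μ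
  simp only [Pi.pow_apply, Pi.abs_apply, sq_abs] at hvar
  exact abs_le_of_sq_le_sq' (by linarith) hC |>.2

theorem memLp_restrict_of_continuousOn_isCompact [TopologicalSpace α] [OpensMeasurableSpace α]
    [IsFiniteMeasureOnCompacts μ] {f : α → ℝ} {K s : Set α} (hK : IsCompact K)
    (hf : ContinuousOn f K) (hs : MeasurableSet s) (hsK : s ⊆ K) (q : ENNReal) :
    MemLp f q (μ.restrict s) := by
  obtain ⟨M, hM⟩ := hK.exists_bound_of_continuousOn hf
  have : IsFiniteMeasure (μ.restrict s) :=
    ⟨by simpa using (measure_mono hsK).trans_lt hK.measure_lt_top⟩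
  refine MemLp.of_bound ((hf.mono hsK).aestronglyMeasurable hs) M ?_
  filter_upwards [ae_restrict_mem hs] with x hx
  exact hM x (hsK hx)

theorem tendsto_setIntegral_mul_sub_of_tendstoUniformlyOn {ι : Type*} {l : Filter ι} {s : Set α}
    (hs : MeasurableSet s) {F g : ι → α → ℝ} {g₀ : α → ℝ} {C : ℝ}
    (hF : ∀ᶠ i in l, IntegrableOn (F i) s μ) (hC : ∀ᶠ i in l, ∫ x in s, |F i x| ∂μ ≤ C)
    (hg : TendstoUniformlyOn g g₀ l s) :
    Tendsto (fun i => ∫ x in s, F i x * (g i x - g₀ x) ∂μ) l (𝓝 0) := by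
  rw [Metric.tendsto_nhds]
  intro δ hδ
  have : 0 < |C| + 1 := by positivity
  filter_upwards [hF, hC, Metric.tendstoUniformlyOn_iff.1 hg (δ / (|C| + 1)) (by positivity)]
    with i hFi hCi hgi
  have hbound : ‖∫ x in s, F i x * (g i x - g₀ x) ∂μ‖
      ≤ ∫ x in s, |F i x| * (δ / (|C| + 1)) ∂μ := by
    refine norm_integral_le_of_norm_le (hFi.abs.mul_const _) ?_
    filter_upwards [ae_restrict_mem hs] with x hx
    rw [norm_mul, ← dist_eq_norm, dist_comm]
    exact mul_le_mul_of_nonneg_left (hgi x hx).le (abs_nonneg _)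
  rw [dist_zero_right]
  calc _ ≤ (∫ x in s, |F i x| ∂μ) * (δ / (|C| + 1)) := by rwa [integral_mul_const] at hbound
    _ ≤ |C| * (δ / (|C| + 1)) := by gcongr; exact hCi.trans (le_abs_self C)
    _ < (|C| + 1) * (δ / (|C| + 1)) := by gcongr; linarith
    _ = δ := by field_simp

end General

section Domain

instance isProbabilityMeasure_restrict_Ioo_zero_one :
    IsProbabilityMeasure (volume.restrict (Ioo (0 : ℝ) 1)) :=
  ⟨by simp⟩

theorem measurableSet_twoScaleDom : MeasurableSet twoScaleDom :=
  measurableSet_Ioo.prod measurableSet_Ioo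

theorem volume_restrict_twoScaleDom :
    volume.restrict twoScaleDom = (volume.restrict (Ioo (0 : ℝ) 1)).prod
      (volume.restrict (Ioo (-(1 / 2) : ℝ) (1 / 2))) :=
  (Measure.prod_restrict _ _).symm

instance isProbabilityMeasure_restrict_twoScaleDom :
    IsProbabilityMeasure (volume.restrict twoScaleDom) :=
  ⟨by norm_num [twoScaleDom, Measure.volume_eq_prod]⟩

theorem twoScaleDom_subset_Icc_prod_Icc :
    twoScaleDom ⊆ Icc (0 : ℝ) 1 ×ˢ Icc (-(1 / 2) : ℝ) (1 / 2) :=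
  prod_mono Ioo_subset_Icc_self Ioo_subset_Icc_self

theorem integrableOn_twoScaleDom_mul_continuous {f g : ℝ × ℝ → ℝ}
    (hf : IntegrableOn f twoScaleDom) (hg : Continuous g) :
    IntegrableOn (fun p => f p * g p) twoScaleDom :=
  hf.mul_continuousOn_of_subset hg.continuousOn measurableSet_twoScaleDom
    (isCompact_Icc.prod isCompact_Icc) twoScaleDom_subset_Icc_prod_Icc

theorem memLp_twoScaleDom_of_continuous {f : ℝ × ℝ → ℝ} (hf : Continuous f) (q : ENNReal) :
    MemLp f q (volume.restrict twoScaleDom) :=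
  memLp_restrict_of_continuousOn_isCompact (isCompact_Icc.prod isCompact_Icc) hf.continuousOn
    measurableSet_twoScaleDom twoScaleDom_subset_Icc_prod_Icc q

theorem integrableOn_twoScaleDom_of_continuous {f : ℝ × ℝ → ℝ} (hf : Continuous f) :
    IntegrableOn f twoScaleDom :=
  (memLp_twoScaleDom_of_continuous hf 1).integrable le_rfl

theorem setIntegral_twoScaleDom {f : ℝ × ℝ → ℝ} (hf : IntegrableOn f twoScaleDom) :
    ∫ p in twoScaleDom, f p = ∫ x in (0 : ℝ)..1, ∫ y in (-(1 / 2) : ℝ)..(1 / 2), f (x, y) := by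
  rw [IntegrableOn, volume_restrict_twoScaleDom] at hf
  rw [volume_restrict_twoScaleDom, integral_prod f hf,
    intervalIntegral.integral_of_le zero_le_one, integral_Ioc_eq_integral_Ioo]
  simp_rw [intervalIntegral.integral_of_le (show (-(1 / 2) : ℝ) ≤ 1 / 2 by norm_num),
    integral_Ioc_eq_integral_Ioo]

theorem setIntegral_twoScaleDom_fst (g : ℝ → ℝ) :
    ∫ p in twoScaleDom, g p.1 = ∫ x in (0 : ℝ)..1, g x := by
  rw [volume_restrict_twoScaleDom, integral_fun_fst,
    intervalIntegral.integral_of_le zero_le_one, integral_Ioc_eq_integral_Ioo]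
  norm_num

theorem setIntegral_twoScaleDom_eq_zero_of_hasDerivAt {Φ Φ' : ℝ × ℝ → ℝ}
    (hderiv : ∀ x y, HasDerivAt (fun y => Φ (x, y)) (Φ' (x, y)) y)
    (hends : ∀ x, Φ (x, -(1 / 2)) = Φ (x, 1 / 2)) (hint : IntegrableOn Φ' twoScaleDom) :
    ∫ p in twoScaleDom, Φ' p = 0 := by
  rw [IntegrableOn, volume_restrict_twoScaleDom] at hint
  rw [volume_restrict_twoScaleDom, integral_prod _ hint]
  refine integral_eq_zero_of_ae ?_
  filter_upwards [hint.prod_right_ae] with x hx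
  have hle : (-(1 / 2) : ℝ) ≤ 1 / 2 := by norm_num
  rw [← integral_Ioc_eq_integral_Ioo, ← intervalIntegral.integral_of_le hle,
    intervalIntegral.integral_eq_sub_of_hasDerivAt (fun y _ => hderiv x y)
      ((intervalIntegrable_iff_integrableOn_Ioo_of_le hle).2 hx), hends, sub_self, Pi.zero_apply]

end Domain

section TwoScaleMap

/-- The map `(x, y) ↦ x_c + εy`, `x_c` being the centre of the cell of size `ε = 1/N` that contains
`x`; the two-scale transform is composition with this map. -/
noncomputable def twoScaleMap (N : ℕ) (p : ℝ × ℝ) : ℝ :=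
  (1 / (N : ℝ)) * ((⌊p.1 / (1 / (N : ℝ))⌋ : ℝ) + 1 / 2) + (1 / (N : ℝ)) * p.2

theorem twoScale_eq_comp_twoScaleMap (N : ℕ) (u : ℝ → ℝ) (p : ℝ × ℝ) :
    twoScale N u p.1 p.2 = u (twoScaleMap N p) :=
  rfl

theorem measurable_twoScaleMap (N : ℕ) : Measurable (twoScaleMap N) := by
  unfold twoScaleMap
  fun_prop

theorem hasDerivAt_twoScaleMap_snd (N : ℕ) (x y : ℝ) :
    HasDerivAt (fun y => twoScaleMap N (x, y)) (1 / (N : ℝ)) y := by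
  simpa only [twoScaleMap, mul_one] using ((hasDerivAt_id' y).const_mul (1 / (N : ℝ))).const_add
    ((1 / (N : ℝ)) * ((⌊x / (1 / (N : ℝ))⌋ : ℝ) + 1 / 2))

variable {N : ℕ}

theorem abs_twoScaleMap_sub_fst_le (hN : 0 < N) {p : ℝ × ℝ} (hp : p ∈ twoScaleDom) :
    |twoScaleMap N p - p.1| ≤ 1 / N := by
  have : (0 : ℝ) < N := by exact_mod_cast hN
  have hscale : twoScaleMap N p - p.1
      = (1 / N) * (⌊p.1 / (1 / (N : ℝ))⌋ + 1 / 2 + p.2 - p.1 / (1 / (N : ℝ))) := by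
    unfold twoScaleMap
    field_simp
  have hy := hp.2
  have hfloor := Int.floor_le (p.1 / (1 / (N : ℝ)))
  have hfloor' := Int.lt_floor_add_one (p.1 / (1 / (N : ℝ)))
  rw [hscale, abs_mul, abs_of_pos (by positivity : (0 : ℝ) < 1 / N)]
  refine mul_le_of_le_one_right (by positivity) (abs_le.2 ⟨?_, ?_⟩) <;> linarith [hy.1, hy.2]

theorem twoScaleMap_eq_of_mem_cell (hN : 0 < N) {k : ℕ} {x : ℝ}
    (hx : x ∈ Ioo ((k : ℝ) / N) ((k + 1 : ℕ) / N)) (y : ℝ) :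
    twoScaleMap N (x, y) = (1 / N) * (k + 1 / 2) + (1 / N) * y := by
  have hN' : (0 : ℝ) < N := by exact_mod_cast hN
  have hfloor : ⌊x / (1 / (N : ℝ))⌋ = k := by
    rw [Int.floor_eq_iff, div_div_eq_mul_div, div_one]
    have hlower := (div_lt_iff₀ hN').1 hx.1
    have hupper := (lt_div_iff₀ hN').1 hx.2
    push_cast at hupper ⊢
    exact ⟨hlower.le, hupper⟩
  simp only [twoScaleMap, hfloor, Int.cast_natCast]

theorem intervalIntegral_comp_twoScaleMap_of_mem_cell (hN : 0 < N) {k : ℕ} {x : ℝ}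
    (hx : x ∈ Ioo ((k : ℝ) / N) ((k + 1 : ℕ) / N)) (g : ℝ → ℝ) :
    ∫ y in (-(1 / 2) : ℝ)..(1 / 2), g (twoScaleMap N (x, y))
      = N * ∫ z in (k / N : ℝ)..(k + 1 : ℕ) / N, g z := by
  have hN' : (N : ℝ) ≠ 0 := by exact_mod_cast hN.ne'
  simp_rw [twoScaleMap_eq_of_mem_cell hN hx]
  rw [intervalIntegral.integral_comp_add_mul g (one_div_ne_zero hN'), one_div, inv_inv,
    smul_eq_mul]
  congr 2
  all_goals
    push_cast
    field_simp
    ring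

theorem intervalIntegral_intervalIntegral_comp_twoScaleMap (hN : 0 < N) {g : ℝ → ℝ}
    (hg : Continuous g) :
    ∫ x in (0 : ℝ)..1, ∫ y in (-(1 / 2) : ℝ)..(1 / 2), g (twoScaleMap N (x, y))
      = ∫ x in (0 : ℝ)..1, g x := by
  have hN' : (N : ℝ) ≠ 0 := by exact_mod_cast hN.ne'
  let cellMean (x : ℝ) : ℝ := ∫ y in (-(1 / 2) : ℝ)..(1 / 2), g (twoScaleMap N (x, y))
  have hle (k : ℕ) : (k : ℝ) / N ≤ (k + 1 : ℕ) / N := by gcongr; simp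
  have hconst (k : ℕ) : EqOn cellMean (fun _ => N * ∫ z in (k / N : ℝ)..(k + 1 : ℕ) / N, g z)
      (uIoo ((k : ℝ) / N) ((k + 1 : ℕ) / N)) := fun x hx =>
    intervalIntegral_comp_twoScaleMap_of_mem_cell hN (uIoo_of_le (hle k) ▸ hx) g
  have hcell (k : ℕ) : ∫ x in (k / N : ℝ)..(k + 1 : ℕ) / N, cellMean x
      = ∫ z in (k / N : ℝ)..(k + 1 : ℕ) / N, g z := by
    rw [intervalIntegral.integral_congr_uIoo (hconst k), intervalIntegral.integral_const,
      smul_eq_mul]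
    push_cast
    field_simp
    ring
  have hends : ((0 : ℕ) : ℝ) / N = 0 ∧ (N : ℝ) / N = 1 := by simp [hN']
  calc ∫ x in (0 : ℝ)..1, cellMean x
      = ∑ k ∈ Finset.range N, ∫ x in (k / N : ℝ)..(k + 1 : ℕ) / N, cellMean x := by
        rw [intervalIntegral.sum_integral_adjacent_intervals (a := fun k : ℕ => (k : ℝ) / N)
          fun k _ => intervalIntegrable_const.congr_uIoo (hconst k).symm, hends.1, hends.2]
    _ = ∑ k ∈ Finset.range N, ∫ z in (k / N : ℝ)..(k + 1 : ℕ) / N, g z :=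
        Finset.sum_congr rfl fun k _ => hcell k
    _ = ∫ z in (0 : ℝ)..1, g z := by
        rw [intervalIntegral.sum_integral_adjacent_intervals (a := fun k : ℕ => (k : ℝ) / N)
          fun k _ => hg.intervalIntegrable _ _, hends.1, hends.2]

theorem measurePreserving_twoScaleMap (hN : 0 < N) :
    MeasurePreserving (twoScaleMap N) (volume.restrict twoScaleDom)
      (volume.restrict (Ioo (0 : ℝ) 1)) := by
  refine ⟨measurable_twoScaleMap N, ext_of_forall_integral_eq_of_IsFiniteMeasure fun g => ?_⟩
  have hbounded : IntegrableOn (fun p => g (twoScaleMap N p)) twoScaleDom :=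
    Integrable.of_bound
      (g.continuous.measurable.comp (measurable_twoScaleMap N)).aestronglyMeasurable
      ‖g‖ (ae_of_all _ fun p => g.norm_coe_le_norm _)
  rw [integral_map (measurable_twoScaleMap N).aemeasurable
      g.continuous.aestronglyMeasurable, setIntegral_twoScaleDom hbounded,
    intervalIntegral_intervalIntegral_comp_twoScaleMap hN g.continuous,
    intervalIntegral.integral_of_le zero_le_one, integral_Ioc_eq_integral_Ioo]

theorem integrableOn_twoScale (hN : 0 < N) {u : ℝ → ℝ} (hu : IntegrableOn u (Ioo 0 1)) :
    IntegrableOn (fun p => twoScale N u p.1 p.2) twoScaleDom :=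
  (measurePreserving_twoScaleMap hN).integrable_comp_of_integrable hu

theorem integrableOn_twoScale_of_continuous (hN : 0 < N) {u : ℝ → ℝ} (hu : Continuous u) :
    IntegrableOn (fun p => twoScale N u p.1 p.2) twoScaleDom :=
  integrableOn_twoScale hN (hu.integrableOn_Icc.mono_set Ioo_subset_Icc_self)

theorem setIntegral_twoScale (hN : 0 < N) {u : ℝ → ℝ} (hu : IntegrableOn u (Ioo 0 1)) :
    ∫ p in twoScaleDom, twoScale N u p.1 p.2 = ∫ x in Ioo (0 : ℝ) 1, u x := by
  have hmp := measurePreserving_twoScaleMap hN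
  rw [← hmp.map_eq, integral_map hmp.measurable.aemeasurable
    (hmp.map_eq.symm ▸ hu.aestronglyMeasurable)]
  simp only [twoScale_eq_comp_twoScaleMap]

theorem tendstoUniformlyOn_twoScale {f : ℝ → ℝ} (hf : Continuous f) :
    TendstoUniformlyOn (fun N p => twoScale N f p.1 p.2) (fun p => f p.1) atTop twoScaleDom := by
  have hmap : TendstoUniformlyOn twoScaleMap Prod.fst atTop twoScaleDom := by
    rw [Metric.tendstoUniformlyOn_iff]
    intro δ hδ
    filter_upwards [eventually_gt_atTop 0,
      (tendsto_one_div_atTop_nhds_zero_nat (𝕜 := ℝ)).eventually_lt_const hδ] with N hN hNδ p hp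
    rw [dist_comm, Real.dist_eq]
    exact (abs_twoScaleMap_sub_fst_le hN hp).trans_lt hNδ
  have hrange : ∀ᶠ N in atTop, ∀ p ∈ twoScaleDom, twoScaleMap N p ∈ Icc (-1 : ℝ) 2 := by
    filter_upwards [Metric.tendstoUniformlyOn_iff.1 hmap 1 one_pos] with N hN p hp
    have hdist := abs_lt.1 (hN p hp)
    constructor <;> linarith [hdist.1, hdist.2, hp.1.1, hp.1.2]
  exact UniformContinuousOn.comp_tendstoUniformlyOn_eventually hrange
    (fun p hp => ⟨by linarith [hp.1.1], by linarith [hp.1.2]⟩)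
    (isCompact_Icc.uniformContinuousOn_of_continuous hf.continuousOn) hmap

end TwoScaleMap

section IntegrationByParts

theorem setIntegral_twoScale_deriv_mul {N : ℕ} (hN : 0 < N) {u : ℝ → ℝ} (hu : ContDiff ℝ 1 u)
    {W W' : ℝ × ℝ → ℝ} (hW : Continuous W) (hW' : Continuous W')
    (hderiv : ∀ x y, HasDerivAt (fun y => W (x, y)) (W' (x, y)) y)
    (hleft : ∀ x, W (x, -(1 / 2)) = 0) (hright : ∀ x, W (x, 1 / 2) = 0) :
    ∫ p in twoScaleDom, twoScale N (deriv u) p.1 p.2 * W p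
      = -(N * ∫ p in twoScaleDom, twoScale N u p.1 p.2 * W' p) := by
  have hN' : (N : ℝ) ≠ 0 := by exact_mod_cast hN.ne'
  have hu' := integrableOn_twoScale_of_continuous hN (hu.continuous_deriv le_rfl)
  have hint' := (integrableOn_twoScaleDom_mul_continuous hu' hW).const_mul (1 / (N : ℝ))
  have hint := integrableOn_twoScaleDom_mul_continuous
    (integrableOn_twoScale_of_continuous hN hu.continuous) hW'
  have hproduct (x y : ℝ) : HasDerivAt (fun y => twoScale N u x y * W (x, y))
      (1 / N * (twoScale N (deriv u) x y * W (x, y)) + twoScale N u x y * W' (x, y)) y := by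
    have hchain : HasDerivAt (fun y => twoScale N u x y)
        (twoScale N (deriv u) x y * (1 / (N : ℝ))) y :=
      (hu.differentiable one_ne_zero _).hasDerivAt.comp y (hasDerivAt_twoScaleMap_snd N x y)
    exact (hchain.fun_mul (hderiv x y)).congr_deriv (by ring)
  have hzero := setIntegral_twoScaleDom_eq_zero_of_hasDerivAt
    (Φ := fun p => twoScale N u p.1 p.2 * W p) hproduct
    (fun x => by simp only [hleft, hright, mul_zero]) (hint'.add hint)
  rw [integral_add' hint' hint, integral_const_mul] at hzero
  field_simp at hzero
  linarith

theorem intervalIntegral_deriv_mul_eq_neg {f g : ℝ → ℝ} (hf : ContDiff ℝ 1 f)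
    (hg : ContDiff ℝ 1 g) {a b : ℝ} (ha : f a = 0) (hb : f b = 0) :
    ∫ x in a..b, deriv g x * f x = -∫ x in a..b, g x * deriv f x := by
  have hparts := intervalIntegral.integral_mul_deriv_eq_deriv_mul (a := a) (b := b)
    (fun x _ => (hg.differentiable one_ne_zero x).hasDerivAt)
    (fun x _ => (hf.differentiable one_ne_zero x).hasDerivAt)
    ((hg.continuous_deriv le_rfl).intervalIntegrable _ _)
    ((hf.continuous_deriv le_rfl).intervalIntegrable _ _)
  rw [ha, hb] at hparts
  linarith

theorem setIntegral_twoScaleDom_fst_mul_trace {h : ℝ → ℝ} (hh : Continuous h)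
    {v w : ℝ × ℝ → ℝ} (hv : Continuous v) (hw : Continuous w)
    (hderiv : ∀ x y, HasDerivAt (fun y => v (x, y)) (w (x, y)) y)
    (hends : ∀ x, v (x, -(1 / 2)) = v (x, 1 / 2)) :
    ∫ p in twoScaleDom, h p.1 * v (p.1, 1 / 2)
      = (∫ p in twoScaleDom, h p.1 * v p) + ∫ p in twoScaleDom, p.2 * h p.1 * w p := by
  have hderiv' (x y : ℝ) : HasDerivAt (fun y => h x * (y * (v (x, y) - v (x, 1 / 2))))
      (h x * v (x, y) + y * h x * w (x, y) - h x * v (x, 1 / 2)) y :=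
    (((hasDerivAt_id' y).fun_mul ((hderiv x y).sub_const _)).const_mul (h x)).congr_deriv
      (by ring)
  have hvalue := integrableOn_twoScaleDom_of_continuous
    (f := fun p : ℝ × ℝ => h p.1 * v p) (by fun_prop)
  have hslope := integrableOn_twoScaleDom_of_continuous
    (f := fun p : ℝ × ℝ => p.2 * h p.1 * w p) (by fun_prop)
  have htrace := integrableOn_twoScaleDom_of_continuous
    (f := fun p : ℝ × ℝ => h p.1 * v (p.1, 1 / 2)) (by fun_prop)
  have hzero := setIntegral_twoScaleDom_eq_zero_of_hasDerivAt
    (Φ := fun p => h p.1 * (p.2 * (v p - v (p.1, 1 / 2)))) hderiv'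
    (fun x => by simp only [hends, sub_self, mul_zero]) ((hvalue.add hslope).sub htrace)
  rw [integral_sub' (hvalue.add hslope) htrace, integral_add' hvalue hslope] at hzero
  linarith

end IntegrationByParts

section Limits

variable {u : ℕ → ℝ → ℝ}

theorem tendsto_setIntegral_twoScale_mul_sub {f : ℝ → ℝ} (hf : Continuous f) {C : ℝ}
    (hu : ∀ N, IntegrableOn (u N) (Ioo 0 1)) (hC : ∀ N, ∫ x in Ioo (0 : ℝ) 1, |u N x| ≤ C) :
    Tendsto (fun N : ℕ => (∫ x in Ioo (0 : ℝ) 1, u N x * f x)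
      - ∫ p in twoScaleDom, twoScale N (u N) p.1 p.2 * f p.1) atTop (𝓝 0) := by
  have hintegrable : ∀ᶠ N in atTop,
      IntegrableOn (fun p => twoScale N (u N) p.1 p.2) twoScaleDom := by
    filter_upwards [eventually_gt_atTop 0] with N hN using integrableOn_twoScale hN (hu N)
  have hbound : ∀ᶠ N in atTop, ∫ p in twoScaleDom, |twoScale N (u N) p.1 p.2| ≤ C := by
    filter_upwards [eventually_gt_atTop 0] with N hN
    exact (setIntegral_twoScale hN (hu N).abs).trans_le (hC N)
  refine (tendsto_setIntegral_mul_sub_of_tendstoUniformlyOn measurableSet_twoScaleDom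
    hintegrable hbound (tendstoUniformlyOn_twoScale hf)).congr' ?_
  filter_upwards [eventually_gt_atTop 0] with N hN
  have hprod : IntegrableOn (fun x => u N x * f x) (Ioo 0 1) :=
    (hu N).mul_continuousOn_of_subset hf.continuousOn measurableSet_Ioo isCompact_Icc
      Ioo_subset_Icc_self
  simp_rw [mul_sub]
  rw [← setIntegral_twoScale hN hprod]
  exact integral_sub (integrableOn_twoScale hN hprod)
    (integrableOn_twoScaleDom_mul_continuous (integrableOn_twoScale hN (hu N))
      (hf.comp continuous_fst))

theorem tendsto_setIntegral_twoScale_deriv_mul_fst (hu : ∀ N, ContDiff ℝ 1 (u N)) {C : ℝ}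
    (hbound : ∀ N, (∫ x in Ioo (0 : ℝ) 1, |u N x|) ≤ C ∧
      (∫ x in Ioo (0 : ℝ) 1, |deriv (u N) x|) ≤ C)
    {f : ℝ → ℝ} (hf : ContDiff ℝ 1 f) (hf0 : f 0 = 0) (hf1 : f 1 = 0) {L : ℝ}
    (hL : Tendsto (fun N : ℕ => ∫ p in twoScaleDom, twoScale N (u N) p.1 p.2 * deriv f p.1)
      atTop (𝓝 L)) :
    Tendsto (fun N : ℕ => ∫ p in twoScaleDom, twoScale N (deriv (u N)) p.1 p.2 * f p.1)
      atTop (𝓝 (-L)) := by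
  have hintegrable {g : ℝ → ℝ} (hg : Continuous g) : IntegrableOn g (Ioo 0 1) :=
    hg.integrableOn_Icc.mono_set Ioo_subset_Icc_self
  have hvalue := tendsto_setIntegral_twoScale_mul_sub (hf.continuous_deriv le_rfl)
    (fun N => hintegrable (hu N).continuous) fun N => (hbound N).1
  have hderiv := tendsto_setIntegral_twoScale_mul_sub hf.continuous
    (fun N => hintegrable ((hu N).continuous_deriv le_rfl)) fun N => (hbound N).2
  have hparts (N : ℕ) : ∫ x in Ioo (0 : ℝ) 1, deriv (u N) x * f x
      = -∫ x in Ioo (0 : ℝ) 1, u N x * deriv f x := by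
    simpa only [intervalIntegral.integral_of_le zero_le_one, integral_Ioc_eq_integral_Ioo]
      using intervalIntegral_deriv_mul_eq_neg hf (hu N) hf0 hf1
  have hlim := ((hvalue.add hderiv).add hL).neg
  simp only [zero_add] at hlim
  refine hlim.congr fun N => ?_
  rw [hparts]
  ring

variable {u0 u1 w : ℝ × ℝ → ℝ}

theorem tendsto_mul_setIntegral_twoScale_mul_sub (hu : ∀ N, Continuous (u N))
    (hu0 : IntegrableOn u0 twoScaleDom) (hu1 : IntegrableOn u1 twoScaleDom) (hw : Continuous w)
    (hexp : Tendsto (fun N : ℕ => (N : ℝ) * ∫ p in twoScaleDom,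
      (twoScale N (u N) p.1 p.2 - u0 p - (1 / (N : ℝ)) * u1 p) * w p) atTop (𝓝 0)) :
    Tendsto (fun N : ℕ => (N : ℝ) * ((∫ p in twoScaleDom, twoScale N (u N) p.1 p.2 * w p)
      - ∫ p in twoScaleDom, u0 p * w p)) atTop (𝓝 (∫ p in twoScaleDom, u1 p * w p)) := by
  have hlim := hexp.add_const (∫ p in twoScaleDom, u1 p * w p)
  rw [zero_add] at hlim
  refine hlim.congr' ?_
  filter_upwards [eventually_gt_atTop 0] with N hN
  have hN' : (N : ℝ) ≠ 0 := by exact_mod_cast hN.ne'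
  have hT := integrableOn_twoScaleDom_mul_continuous
    (integrableOn_twoScale_of_continuous hN (hu N)) hw
  have h0 := integrableOn_twoScaleDom_mul_continuous hu0 hw
  have h1 := (integrableOn_twoScaleDom_mul_continuous hu1 hw).const_mul (1 / (N : ℝ))
  have hdiff : IntegrableOn (fun p => twoScale N (u N) p.1 p.2 * w p - u0 p * w p) twoScaleDom :=
    hT.sub h0
  simp_rw [sub_mul, mul_assoc]
  rw [integral_sub hdiff h1, integral_sub hT h0, integral_const_mul]
  field_simp
  ring

theorem tendsto_of_tendsto_natCast_mul_sub {a : ℕ → ℝ} {l L : ℝ}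
    (h : Tendsto (fun N : ℕ => (N : ℝ) * (a N - l)) atTop (𝓝 L)) : Tendsto a atTop (𝓝 l) := by
  have hlim := ((tendsto_one_div_atTop_nhds_zero_nat (𝕜 := ℝ)).mul h).add_const l
  rw [zero_mul, zero_add] at hlim
  refine hlim.congr' ?_
  filter_upwards [eventually_gt_atTop 0] with N hN
  field_simp
  ring

end Limits

section TestFunctions

variable {v : ℝ → ℝ → ℝ} (hv : ContDiff ℝ 1 fun p : ℝ × ℝ => v p.1 p.2)
include hv

theorem hasDerivAt_snd_of_contDiff (x y : ℝ) :
    HasDerivAt (fun y => v x y) (deriv (fun y => v x y) y) y := by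
  have hslice : ContDiff ℝ 1 fun y => v x y := hv.comp (contDiff_prodMk_right x)
  exact (hslice.differentiable one_ne_zero y).hasDerivAt

theorem continuous_deriv_snd_of_contDiff :
    Continuous fun p : ℝ × ℝ => deriv (fun y => v p.1 y) p.2 := by
  have hslices : ContDiff ℝ 1 (Function.uncurry fun (p : ℝ × ℝ) y => v p.1 y) :=
    hv.comp ((contDiff_fst.comp contDiff_fst).prodMk contDiff_snd)
  simp_rw [← fderiv_apply_one_eq_deriv]
  exact (hslices.fderiv contDiff_snd (zero_add 1).le).continuous.clm_apply continuous_const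

theorem setIntegral_twoScale_deriv_mul_eq_trace_sub {N : ℕ} (hN : 0 < N) {u : ℝ → ℝ}
    (hu : ContDiff ℝ 1 u) (hends : ∀ x, v x (-(1 / 2)) = v x (1 / 2)) :
    ∫ p in twoScaleDom, twoScale N (deriv u) p.1 p.2 * v p.1 p.2
      = (∫ p in twoScaleDom, twoScale N (deriv u) p.1 p.2 * v p.1 (1 / 2))
        - N * ∫ p in twoScaleDom, twoScale N u p.1 p.2 * deriv (fun y => v p.1 y) p.2 := by
  have hvc : Continuous fun p : ℝ × ℝ => v p.1 p.2 := hv.continuous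
  have htrace : Continuous fun p : ℝ × ℝ => v p.1 (1 / 2) :=
    hvc.comp (continuous_fst.prodMk continuous_const)
  have hT := integrableOn_twoScale_of_continuous hN (hu.continuous_deriv le_rfl)
  have hparts : ∫ p in twoScaleDom,
        twoScale N (deriv u) p.1 p.2 * (v p.1 p.2 - v p.1 (1 / 2))
      = -(N * ∫ p in twoScaleDom, twoScale N u p.1 p.2 * deriv (fun y => v p.1 y) p.2) :=
    setIntegral_twoScale_deriv_mul hN hu (hvc.sub htrace) (continuous_deriv_snd_of_contDiff hv)
      (fun x y => (hasDerivAt_snd_of_contDiff hv x y).sub_const (v x (1 / 2)))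
      (fun x => sub_eq_zero.2 (hends x)) (fun x => sub_self (v x (1 / 2)))
  simp only [mul_sub] at hparts
  rw [integral_sub (integrableOn_twoScaleDom_mul_continuous hT hvc)
    (integrableOn_twoScaleDom_mul_continuous hT htrace)] at hparts
  linarith

theorem neg_setIntegral_fst_mul_deriv_trace {g : ℝ → ℝ} (hg : ContDiff ℝ 1 g)
    (hends : ∀ x, v x (-(1 / 2)) = v x (1 / 2)) (hv0 : v 0 (1 / 2) = 0) (hv1 : v 1 (1 / 2) = 0) :
    -∫ p in twoScaleDom, g p.1 * deriv (fun x => v x (1 / 2)) p.1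
      = (∫ p in twoScaleDom, deriv g p.1 * v p.1 p.2)
        + ∫ p in twoScaleDom, p.2 * deriv g p.1 * deriv (fun y => v p.1 y) p.2 := by
  have htrace : ContDiff ℝ 1 fun x => v x (1 / 2) := hv.comp (contDiff_prodMk_left _)
  rw [setIntegral_twoScaleDom_fst fun x => g x * deriv (fun x => v x (1 / 2)) x,
    ← intervalIntegral_deriv_mul_eq_neg htrace hg hv0 hv1, ← setIntegral_twoScaleDom_fst]
  exact setIntegral_twoScaleDom_fst_mul_trace (hg.continuous_deriv le_rfl) hv.continuous
    (continuous_deriv_snd_of_contDiff hv) (hasDerivAt_snd_of_contDiff hv) hends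

end TestFunctions

theorem third_block_microscopic_boundary_condition_general
    (u : ℕ → ℝ → ℝ) (hu : ∀ N, ContDiff ℝ 1 (u N)) (C : ℝ)
    (hbound : ∀ N : ℕ, (∫ x in Ioo (0 : ℝ) 1, |u N x|) ≤ C ∧
      (∫ x in Ioo (0 : ℝ) 1, |deriv (u N) x|) ≤ C)
    (u0 u1 : ℝ × ℝ → ℝ) (hu1 : IntegrableOn u1 twoScaleDom)
    (hexp : ∀ w : ℝ × ℝ → ℝ, Continuous w →
      Tendsto (fun N : ℕ => (N : ℝ) * ∫ p in twoScaleDom,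
        (twoScale N (u N) p.1 p.2 - u0 p - (1 / (N : ℝ)) * u1 p) * w p) atTop (𝓝 0))
    (ub : ℝ → ℝ) (hub : ContDiff ℝ 1 ub)
    (hu0eq : ∀ᵐ p ∂(volume.restrict twoScaleDom), u0 p = ub p.1)
    (v : ℝ → ℝ → ℝ) (hv : ContDiff ℝ 1 fun p : ℝ × ℝ => v p.1 p.2)
    (hends : ∀ x, v x (-(1 / 2)) = v x (1 / 2)) (hv0 : v 0 (1 / 2) = 0) (hv1 : v 1 (1 / 2) = 0) :
    Tendsto (fun N : ℕ => ∫ p in twoScaleDom, twoScale N (deriv (u N)) p.1 p.2 * v p.1 p.2) atTop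
      (𝓝 ((∫ p in twoScaleDom, deriv ub p.1 * v p.1 p.2)
        - ∫ p in twoScaleDom, (u1 p - p.2 * deriv ub p.1) * deriv (fun y => v p.1 y) p.2)) := by
  have hvy := continuous_deriv_snd_of_contDiff hv
  have hub' : Continuous (deriv ub) := hub.continuous_deriv le_rfl
  have hubc : Continuous fun p : ℝ × ℝ => ub p.1 := hub.continuous.comp continuous_fst
  have hu0 : IntegrableOn u0 twoScaleDom :=
    (integrableOn_twoScaleDom_of_continuous hubc).congr_fun_ae (EventuallyEq.symm hu0eq)
  have htrace : ContDiff ℝ 1 fun x => v x (1 / 2) := hv.comp (contDiff_prodMk_left _)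
  have hlim (w : ℝ × ℝ → ℝ) (hw : Continuous w) :
      Tendsto (fun N : ℕ => (N : ℝ) * ((∫ p in twoScaleDom, twoScale N (u N) p.1 p.2 * w p)
        - ∫ p in twoScaleDom, ub p.1 * w p)) atTop (𝓝 (∫ p in twoScaleDom, u1 p * w p)) := by
    have hu0w : ∫ p in twoScaleDom, u0 p * w p = ∫ p in twoScaleDom, ub p.1 * w p :=
      integral_congr_ae (hu0eq.mono fun p hp => congrArg (· * w p) hp)
    simpa only [hu0w] using tendsto_mul_setIntegral_twoScale_mul_sub
      (fun N => (hu N).continuous) hu0 hu1 hw (hexp w hw)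
  have hmicro : ∫ p in twoScaleDom, ub p.1 * deriv (fun y => v p.1 y) p.2 = 0 :=
    setIntegral_twoScaleDom_eq_zero_of_hasDerivAt (Φ := fun p => ub p.1 * v p.1 p.2)
      (fun x y => (hasDerivAt_snd_of_contDiff hv x y).const_mul (ub x))
      (fun x => congrArg (ub x * ·) (hends x))
      (integrableOn_twoScaleDom_of_continuous (hubc.mul hvy))
  have hosc := hlim _ hvy
  simp only [hmicro, sub_zero] at hosc
  have hmean := tendsto_setIntegral_twoScale_deriv_mul_fst hu hbound htrace hv0 hv1
    (tendsto_of_tendsto_natCast_mul_sub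
      (hlim _ ((htrace.continuous_deriv le_rfl).comp continuous_fst)))
  have hcorrector : ∫ p in twoScaleDom,
        (u1 p - p.2 * deriv ub p.1) * deriv (fun y => v p.1 y) p.2
      = (∫ p in twoScaleDom, u1 p * deriv (fun y => v p.1 y) p.2)
        - ∫ p in twoScaleDom, p.2 * deriv ub p.1 * deriv (fun y => v p.1 y) p.2 := by
    simp_rw [sub_mul]
    exact integral_sub (integrableOn_twoScaleDom_mul_continuous hu1 hvy)
      (integrableOn_twoScaleDom_of_continuous
        ((continuous_snd.mul (hub'.comp continuous_fst)).mul hvy))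
  rw [hcorrector, ← sub_add, ← add_sub_right_comm,
    ← neg_setIntegral_fst_mul_deriv_trace hv hub hends hv0 hv1]
  refine (hmean.sub hosc).congr' ?_
  filter_upwards [eventually_gt_atTop 0] with N hN
  exact (setIntegral_twoScale_deriv_mul_eq_trace_sub hv hN (hu N) hends).symm

/-- **Third Block: microscopic boundary condition.** Under the sequence
setting, if moreover `u⁰(x,y) = ū(x)` a.e. with `ū` continuously
differentiable, then `ũ¹(x,y) = u¹(x,y) − y ū'(x)` is `Ω¹`-periodic in `y` and
`η = ū' + ∂ũ¹/∂y`, in the weak sense tested against smooth functions that are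
1-periodic in the second variable and compactly supported in `(0,1)` in the
first variable. -/
theorem third_block_microscopic_boundary_condition
    (u : ℕ → ℝ → ℝ) (hu : ∀ N, ContDiff ℝ 1 (u N))
    (C : ℝ) (hC : 0 < C)
    (hbound : ∀ N : ℕ, (∫ x in Ioo (0 : ℝ) 1, (u N x) ^ 2) ≤ C ^ 2 ∧
      (∫ x in Ioo (0 : ℝ) 1, (deriv (u N) x) ^ 2) ≤ C ^ 2)
    (u0 u1 : ℝ × ℝ → ℝ)
    (hu0 : MemLp u0 2 (volume.restrict twoScaleDom))
    (hu1 : MemLp u1 2 (volume.restrict twoScaleDom))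
    (hexp : ∀ v : ℝ × ℝ → ℝ, MemLp v 2 (volume.restrict twoScaleDom) →
      Tendsto (fun N : ℕ => (N : ℝ) *
          ∫ p in twoScaleDom,
            (twoScale N (u N) p.1 p.2 - u0 p - (1 / (N : ℝ)) * u1 p) * v p)
        atTop (nhds 0))
    (η : ℝ × ℝ → ℝ) (hη : MemLp η 2 (volume.restrict twoScaleDom))
    (hweak : ∀ v : ℝ × ℝ → ℝ, MemLp v 2 (volume.restrict twoScaleDom) →
      Tendsto (fun N : ℕ =>
          ∫ p in twoScaleDom, twoScale N (deriv (u N)) p.1 p.2 * v p)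
        atTop (nhds (∫ p in twoScaleDom, η p * v p)))
    (ub : ℝ → ℝ) (hub : ContDiff ℝ 1 ub)
    (hu0eq : ∀ᵐ p ∂(volume.restrict twoScaleDom), u0 p = ub p.1) :
    ∀ v : ℝ → ℝ → ℝ, ContDiff ℝ (⊤ : ℕ∞) (fun p : ℝ × ℝ => v p.1 p.2) →
      (∀ x y : ℝ, v x (y + 1) = v x y) →
      (∃ K : Set ℝ, IsCompact K ∧ K ⊆ Ioo (0 : ℝ) 1 ∧
        ∀ x ∉ K, ∀ y : ℝ, v x y = 0) →
      ∫ p in twoScaleDom, η p * v p.1 p.2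
        = (∫ p in twoScaleDom, deriv ub p.1 * v p.1 p.2)
          - ∫ p in twoScaleDom,
              (u1 p - p.2 * deriv ub p.1) * deriv (fun y => v p.1 y) p.2 := by
  intro v hv hper ⟨K, _, hK, hv0⟩
  have hL1 {g : ℝ → ℝ} (hg : Continuous g) (h : ∫ x in Ioo (0 : ℝ) 1, g x ^ 2 ≤ C ^ 2) :
      ∫ x in Ioo (0 : ℝ) 1, |g x| ≤ C :=
    integral_abs_le_of_integral_sq_le
      (memLp_restrict_of_continuousOn_isCompact isCompact_Icc hg.continuousOn measurableSet_Ioo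
        Ioo_subset_Icc_self 2) hC.le h
  exact tendsto_nhds_unique (hweak _ (memLp_twoScaleDom_of_continuous hv.continuous 2))
    (third_block_microscopic_boundary_condition_general u hu C
      (fun N => ⟨hL1 (hu N).continuous (hbound N).1,
        hL1 ((hu N).continuous_deriv le_rfl) (hbound N).2⟩)
      u0 u1 (hu1.integrable one_le_two)
      (fun w hw => hexp w (memLp_twoScaleDom_of_continuous hw 2)) ub hub hu0eq
      v (hv.of_le (by exact_mod_cast le_top))
      (fun x => by rw [← hper x (-(1 / 2))]; norm_num)
      (hv0 0 (fun h => lt_irrefl _ (hK h).1) _) (hv0 1 (fun h => lt_irrefl _ (hK h).2) _))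
end

section
/- Fourth Block (macroscopic boundary condition): under the sequence setting, the two-scale expansion hypothesis, and the weak two-scale convergence of the derivatives to η, assume additionally that u_N(0) = u_N(1) = 0 for every N and that there is a continuously differentiable ū : [0,1] → ℝ with u⁰(x,y) = ū(x) for almost every (x,y). Then ū vanishes on the boundary of the macroscopic domain: ū(0) = ū(1) = 0. -/
open Set MeasureTheory Filter

/-!
Bounded derivatives in `L²(0,1)` make the functions `u N` uniformly `1/2`-Hölder, so that
`u N z → b` jointly as `N → ∞` and `z → a` as soon as `u N a → b`. Since the two-scale transform
moves the first variable by at most `1/N`, also `T u N (x, y) → b` jointly as `N → ∞` and `x → a`.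
Weak convergence preserves a.e. bounds on any set, hence the weak limit `u0` tends to `b` along
almost every point approaching `(a, 0)`; there `u0 (x, y) = ub x → ub a`, so `ub a = b`.
-/

open scoped Topology

section WeakConvergence

variable {α ι : Type*} [MeasurableSpace α] {μ : Measure α} {l : Filter ι}
  {f : ι → α → ℝ} {f₀ : α → ℝ}

/-- Weak convergence in `L²(μ)` of functions, rather than of their classes in `Lp ℝ 2 μ`: the
integrals against every square-integrable `v` converge. Square integrability of `f i` and `f₀` is
not part of the definition. -/
def TendstoWeaklyL2 (μ : Measure α) (l : Filter ι) (f : ι → α → ℝ) (f₀ : α → ℝ) : Prop :=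
  ∀ v : α → ℝ, MemLp v 2 μ →
    Tendsto (fun i => ∫ x, f i x * v x ∂μ) l (𝓝 (∫ x, f₀ x * v x ∂μ))

namespace TendstoWeaklyL2

theorem neg (h : TendstoWeaklyL2 μ l f f₀) :
    TendstoWeaklyL2 μ l (fun i x => -f i x) (fun x => -f₀ x) := fun v hv => by
  simpa only [neg_mul, integral_neg] using (h v hv).neg

theorem tendsto_setIntegral (h : TendstoWeaklyL2 μ l f f₀) {s : Set α} (hs : MeasurableSet s)
    (hμs : μ s ≠ ⊤) : Tendsto (fun i => ∫ x in s, f i x ∂μ) l (𝓝 (∫ x in s, f₀ x ∂μ)) := by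
  have hmul (g : α → ℝ) : ∫ x, g x * s.indicator 1 x ∂μ = ∫ x in s, g x ∂μ := by
    rw [← integral_indicator hs]
    refine integral_congr_ae (.of_forall fun x => ?_)
    by_cases hx : x ∈ s <;> simp [hx]
  simpa only [hmul] using h (s.indicator 1) (memLp_indicator_const 2 hs 1 (.inr hμs))

theorem ae_restrict_le_const [SigmaFinite μ] [l.NeBot] (h : TendstoWeaklyL2 μ l f f₀)
    (hf : ∀ i, MemLp (f i) 2 μ) (hf₀ : MemLp f₀ 2 μ) {s : Set α} (hs : MeasurableSet s) {c : ℝ}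
    (hle : ∀ᶠ i in l, ∀ᵐ x ∂μ.restrict s, f i x ≤ c) : ∀ᵐ x ∂μ.restrict s, f₀ x ≤ c := by
  have hint {t : Set α} (ht : μ t < ⊤) {g : α → ℝ} (hg : MemLp g 2 μ) : IntegrableOn g t μ :=
    have : IsFiniteMeasure (μ.restrict t) := isFiniteMeasure_restrict.2 ht.ne
    (hg.restrict t).integrable one_le_two
  have hconst {t : Set α} (ht : μ t < ⊤) : IntegrableOn (fun _ => c) t μ := integrableOn_const ht.ne
  suffices 0 ≤ᵐ[μ.restrict s] fun x => c - f₀ x from this.mono fun x hx => sub_nonneg.1 hx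
  refine ae_nonneg_of_forall_setIntegral_nonneg_of_sigmaFinite (fun t ht hμt => ?_)
    fun t ht hμt => ?_ <;> rw [Measure.restrict_apply ht] at hμt
  · rw [IntegrableOn, Measure.restrict_restrict ht]
    exact (hconst hμt).sub (hint hμt hf₀)
  · rw [Measure.restrict_restrict ht, integral_sub (hconst hμt) (hint hμt hf₀), sub_nonneg]
    refine le_of_tendsto (h.tendsto_setIntegral (ht.inter hs) hμt.ne) (hle.mono fun i hi => ?_)
    exact setIntegral_mono_ae_restrict (hint hμt (hf i)) (hconst hμt)
      (ae_restrict_of_ae_restrict_of_subset inter_subset_right hi)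

theorem tendsto_inf_ae [SigmaFinite μ] [l.NeBot] (h : TendstoWeaklyL2 μ l f f₀)
    (hf : ∀ i, MemLp (f i) 2 μ) (hf₀ : MemLp f₀ 2 μ) {F : Filter α} [F.IsMeasurablyGenerated]
    {b : ℝ} (hb : Tendsto (Function.uncurry f) (l ×ˢ (F ⊓ ae μ)) (𝓝 b)) :
    Tendsto f₀ (F ⊓ ae μ) (𝓝 b) := by
  rw [Metric.nhds_basis_closedBall.tendsto_right_iff] at hb ⊢
  intro e he
  obtain ⟨p, hp, q, hq, hpq⟩ := eventually_prod_iff.1 (hb e he)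
  obtain ⟨s, hsF, hs, hsq⟩ := IsMeasurablyGenerated.exists_measurable_subset hq
  have hclose : ∀ᶠ i in l, ∀ x ∈ s, b - e ≤ f i x ∧ f i x ≤ b + e := hp.mono fun i hi x hx => by
    have := hpq hi (hsq hx)
    rwa [Function.uncurry, Real.closedBall_eq_Icc] at this
  have hupper : ∀ᵐ x ∂μ.restrict s, f₀ x ≤ b + e :=
    h.ae_restrict_le_const hf hf₀ hs <| hclose.mono fun i hi =>
      (ae_restrict_mem hs).mono fun x hx => (hi x hx).2
  have hlower : ∀ᵐ x ∂μ.restrict s, -f₀ x ≤ -(b - e) :=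
    h.neg.ae_restrict_le_const (fun i => (hf i).neg) hf₀.neg hs <| hclose.mono fun i hi =>
      (ae_restrict_mem hs).mono fun x hx => neg_le_neg (hi x hx).1
  rw [ae_restrict_iff' hs] at hupper hlower
  filter_upwards [hsF, hupper.filter_mono inf_le_right, hlower.filter_mono inf_le_right]
    with x hx hux hlx
  rw [Real.closedBall_eq_Icc]
  exact ⟨neg_le_neg_iff.1 (hlx hx), hux hx⟩

theorem of_expansion {f : ℕ → α → ℝ} {f₁ : α → ℝ} (hf : ∀ N, MemLp (f N) 2 μ)
    (hf₀ : MemLp f₀ 2 μ) (hf₁ : MemLp f₁ 2 μ)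
    (hexp : ∀ v : α → ℝ, MemLp v 2 μ → Tendsto (fun N : ℕ => (N : ℝ) *
      ∫ x, (f N x - f₀ x - (1 / (N : ℝ)) * f₁ x) * v x ∂μ) atTop (𝓝 0)) :
    TendstoWeaklyL2 μ atTop f f₀ := by
  intro v hv
  have hsplit (N : ℕ) : ∫ x, (f N x - f₀ x - (1 / (N : ℝ)) * f₁ x) * v x ∂μ =
      ∫ x, f N x * v x ∂μ - ∫ x, f₀ x * v x ∂μ - (1 / (N : ℝ)) * ∫ x, f₁ x * v x ∂μ := by
    have hfv : Integrable (fun x => f N x * v x) μ := (hf N).integrable_mul hv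
    have hf₀v : Integrable (fun x => f₀ x * v x) μ := hf₀.integrable_mul hv
    have hsub : Integrable (fun x => f N x * v x - f₀ x * v x) μ := hfv.sub hf₀v
    have hf₁v : Integrable (fun x => 1 / (N : ℝ) * (f₁ x * v x)) μ :=
      (hf₁.integrable_mul hv).const_mul _
    simp only [sub_mul, mul_assoc]
    rw [← integral_const_mul, ← integral_sub hfv hf₀v, ← integral_sub hsub hf₁v]
  have hinv : Tendsto (fun N : ℕ => 1 / (N : ℝ)) atTop (𝓝 0) := tendsto_one_div_atTop_nhds_zero_nat
  have hlim := ((hinv.mul (hexp v hv)).add (hinv.mul_const (∫ x, f₁ x * v x ∂μ))).add_const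
    (∫ x, f₀ x * v x ∂μ)
  simp only [zero_mul, zero_add] at hlim
  refine hlim.congr' ?_
  filter_upwards [eventually_ne_atTop 0] with N hN
  rw [hsplit]
  field_simp
  ring

end TendstoWeaklyL2

end WeakConvergence

section Support

variable {X : Type*} [TopologicalSpace X] [MeasurableSpace X] {μ : Measure X}

theorem neBot_nhds_inf_ae_of_mem_support {x : X} (hx : x ∈ μ.support) : (𝓝 x ⊓ ae μ).NeBot := by
  rw [inf_neBot_iff]
  intro U hU V hV
  by_contra hUV
  have hsub : U ⊆ Vᶜ := fun z hzU hzV => hUV ⟨z, hzU, hzV⟩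
  exact ((Measure.mem_support_iff_forall x).1 hx U hU).ne' (measure_mono_null hsub hV)

theorem closure_subset_support_restrict [OpensMeasurableSpace X] [μ.IsOpenPosMeasure] {s : Set X}
    (hs : IsOpen s) : closure s ⊆ (μ.restrict s).support := by
  refine closure_minimal (fun x hx => ?_) Measure.isClosed_support
  exact Measure.interior_inter_support ⟨hs.interior_eq.symm ▸ hx, by simp [Measure.support_eq_univ]⟩

end Support

theorem sq_integral_le_measureReal_mul_integral_sq {α : Type*} [MeasurableSpace α] {μ : Measure α}
    [IsFiniteMeasure μ] {f : α → ℝ} (hf : MemLp f 2 μ) :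
    (∫ x, f x ∂μ) ^ 2 ≤ μ.real univ * ∫ x, f x ^ 2 ∂μ := by
  rcases eq_or_ne μ 0 with rfl | hμ
  · simp
  have : NeZero μ := ⟨hμ⟩
  have jensen : (⨍ x, f x ∂μ) ^ 2 ≤ ⨍ x, f x ^ 2 ∂μ :=
    even_two.convexOn_pow.map_average_le (continuous_pow 2).continuousOn isClosed_univ
      (.of_forall fun _ => mem_univ _) (hf.integrable one_le_two) hf.integrable_sq
  have hpos : 0 < μ.real univ := measureReal_univ_pos
  rw [average_eq, average_eq, smul_eq_mul, smul_eq_mul] at jensen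
  field_simp at jensen
  exact jensen

theorem sq_sub_le_abs_mul_integral_deriv_sq {w : ℝ → ℝ} (hw : ContDiff ℝ 1 w) (a z : ℝ) :
    (w z - w a) ^ 2 ≤ |z - a| * ∫ x in uIoc a z, deriv w x ^ 2 := by
  have hc : Continuous (deriv w) := hw.continuous_deriv le_rfl
  have hsq : (w z - w a) ^ 2 = (∫ x in uIoc a z, deriv w x) ^ 2 := by
    rw [← intervalIntegral.integral_deriv_eq_sub
      (fun x _ => hw.differentiable one_ne_zero x) (hc.intervalIntegrable _ _), ← sq_abs,
      intervalIntegral.abs_integral_eq_abs_integral_uIoc, sq_abs]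
  have : IsFiniteMeasure (volume.restrict (uIoc a z)) :=
    isFiniteMeasure_restrict.2 (by simp [uIoc])
  have hL2 : MemLp (deriv w) 2 (volume.restrict (uIoc a z)) :=
    (memLp_two_iff_integrable_sq hc.aestronglyMeasurable).2 (hc.pow 2).integrableOn_uIoc
  have hlength : (volume.restrict (uIoc a z)).real univ = |z - a| := by
    rw [measureReal_restrict_apply_univ, uIoc, Real.volume_real_Ioc_of_le min_le_max,
      max_sub_min_eq_abs]
  rw [hsq, ← hlength]
  exact sq_integral_le_measureReal_mul_integral_sq hL2

theorem tendsto_uncurry_of_integral_deriv_sq_le {ι : Type*} {l : Filter ι} {u : ι → ℝ → ℝ}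
    (hu : ∀ i, ContDiff ℝ 1 (u i)) {p q K : ℝ}
    (hK : ∀ i, ∫ x in Ioo p q, deriv (u i) x ^ 2 ≤ K) {a b : ℝ} (ha : a ∈ Icc p q)
    (hb : Tendsto (fun i => u i a) l (𝓝 b)) :
    Tendsto (Function.uncurry u) (l ×ˢ 𝓝[Icc p q] a) (𝓝 b) := by
  have hHolder (i : ι) {z : ℝ} (hz : z ∈ Icc p q) : |u i z - u i a| ≤ √(|z - a| * K) := by
    have hc : Continuous (deriv (u i)) := (hu i).continuous_deriv le_rfl
    have hle : ∫ x in uIoc a z, deriv (u i) x ^ 2 ≤ K := by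
      refine le_trans ?_ (hK i)
      rw [← integral_Icc_eq_integral_Ioo]
      exact setIntegral_mono_set ((hc.pow 2).integrableOn_Icc) (.of_forall fun x => sq_nonneg _)
        (uIoc_subset_uIcc.trans (uIcc_subset_Icc ha hz)).eventuallyLE
    refine Real.abs_le_sqrt ((sq_sub_le_abs_mul_integral_deriv_sq (hu i) a z).trans ?_)
    gcongr
  have hsqrt : Tendsto (fun r : ι × ℝ => √(|r.2 - a| * K)) (l ×ˢ 𝓝[Icc p q] a) (𝓝 0) := by
    have hcont : Continuous fun z : ℝ => √(|z - a| * K) := by fun_prop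
    have hzero : Tendsto (fun z : ℝ => √(|z - a| * K)) (𝓝 a) (𝓝 0) := by simpa using hcont.tendsto a
    exact (hzero.mono_left nhdsWithin_le_nhds).comp tendsto_snd
  have hdiff : Tendsto (fun r : ι × ℝ => u r.1 r.2 - u r.1 a) (l ×ˢ 𝓝[Icc p q] a) (𝓝 0) := by
    refine squeeze_zero_norm' ?_ hsqrt
    filter_upwards [tendsto_snd.eventually self_mem_nhdsWithin] with r hr using hHolder r.1 hr
  simpa [Function.uncurry_def] using hdiff.add (hb.comp tendsto_fst)

/-- The point of the macroscopic domain with cell variable `y` in the cell of size `1/N` containing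
`x`: `twoScale N u x y` is by definition `u (cellPoint N x y)`. -/
noncomputable def cellPoint (N : ℕ) (x y : ℝ) : ℝ :=
  (1 / (N : ℝ)) * ((⌊x / (1 / (N : ℝ))⌋ : ℝ) + 1 / 2) + (1 / (N : ℝ)) * y

theorem cellPoint_eq_div (N : ℕ) (x y : ℝ) :
    cellPoint N x y = (⌊x * N⌋ + (1 / 2 + y)) / N := by
  rw [cellPoint, div_div_eq_mul_div, div_one]
  ring

theorem measurable_uncurry_cellPoint (N : ℕ) : Measurable (Function.uncurry (cellPoint N)) := by
  simp only [Function.uncurry_def, cellPoint]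
  fun_prop

theorem cellPoint_mem_Icc (N : ℕ) {r : ℝ × ℝ} (hr : r ∈ twoScaleDom) :
    cellPoint N r.1 r.2 ∈ Icc (0 : ℝ) 1 := by
  obtain ⟨⟨hx0, hx1⟩, hy0, hy1⟩ := hr
  rcases N.eq_zero_or_pos with rfl | hN
  · simp [cellPoint]
  have hN' : (0 : ℝ) < N := by exact_mod_cast hN
  have hfloor0 : (0 : ℝ) ≤ ⌊r.1 * N⌋ := by exact_mod_cast Int.floor_nonneg.2 (by positivity)
  have hfloor1 : (⌊r.1 * N⌋ : ℝ) + 1 ≤ N := by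
    have : ⌊r.1 * N⌋ < (N : ℤ) := Int.floor_lt.2 (by simpa using mul_lt_of_lt_one_left hN' hx1)
    exact_mod_cast this
  rw [cellPoint_eq_div, mem_Icc, div_le_one hN']
  exact ⟨div_nonneg (by linarith) hN'.le, by linarith⟩

theorem abs_cellPoint_sub_le {N : ℕ} (hN : N ≠ 0) (x : ℝ) {y : ℝ}
    (hy : y ∈ Icc (-(1 / 2) : ℝ) (1 / 2)) : |cellPoint N x y - x| ≤ 1 / N := by
  have hN' : (0 : ℝ) < N := by positivity
  have hdiff : cellPoint N x y - x = (1 / 2 + y - Int.fract (x * N)) / N := by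
    rw [cellPoint_eq_div, ← Int.self_sub_floor]
    field_simp
    ring
  rw [hdiff, abs_div, abs_of_pos hN']
  gcongr
  have := Int.fract_nonneg (x * N)
  have := Int.fract_lt_one (x * N)
  rw [abs_le]
  constructor <;> linarith [hy.1, hy.2]

theorem tendsto_cellPoint (a y : ℝ) :
    Tendsto (fun r : ℕ × ℝ × ℝ => cellPoint r.1 r.2.1 r.2.2)
      (atTop ×ˢ 𝓝[twoScaleDom] (a, y)) (𝓝[Icc 0 1] a) := by
  have hdom : ∀ᶠ r : ℕ × ℝ × ℝ in atTop ×ˢ 𝓝[twoScaleDom] (a, y), r.2 ∈ twoScaleDom :=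
    tendsto_snd.eventually self_mem_nhdsWithin
  refine tendsto_nhdsWithin_iff.2 ⟨?_, hdom.mono fun r hr => cellPoint_mem_Icc r.1 hr⟩
  have hshift : Tendsto (fun r : ℕ × ℝ × ℝ => cellPoint r.1 r.2.1 r.2.2 - r.2.1)
      (atTop ×ˢ 𝓝[twoScaleDom] (a, y)) (𝓝 0) := by
    refine squeeze_zero_norm' ?_ (tendsto_one_div_atTop_nhds_zero_nat.comp tendsto_fst)
    filter_upwards [hdom, tendsto_fst.eventually (eventually_ne_atTop 0)] with r hr hN
    exact abs_cellPoint_sub_le hN _ (Ioo_subset_Icc_self hr.2)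
  have hfst : Tendsto (fun r : ℕ × ℝ × ℝ => r.2.1) (atTop ×ˢ 𝓝[twoScaleDom] (a, y)) (𝓝 a) :=
    (continuous_fst.continuousWithinAt (s := twoScaleDom) (x := (a, y))).tendsto.comp tendsto_snd
  simpa using hshift.add hfst

theorem isOpen_twoScaleDom : IsOpen twoScaleDom := isOpen_Ioo.prod isOpen_Ioo

instance isFiniteMeasure_restrict_twoScaleDom :
    IsFiniteMeasure (volume.restrict twoScaleDom) :=
  isFiniteMeasure_restrict.2
    ((Metric.isBounded_Ioo 0 1).prod (Metric.isBounded_Ioo _ _)).measure_lt_top.ne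

theorem memLp_twoScale (N : ℕ) {u : ℝ → ℝ} (hu : Continuous u) (p : ENNReal) :
    MemLp (fun r : ℝ × ℝ => twoScale N u r.1 r.2) p (volume.restrict twoScaleDom) := by
  obtain ⟨M, hM⟩ := isCompact_Icc.exists_bound_of_continuousOn (s := Icc (0 : ℝ) 1) hu.continuousOn
  refine .of_bound (hu.measurable.comp (measurable_uncurry_cellPoint N)).aestronglyMeasurable M ?_
  filter_upwards [ae_restrict_mem isOpen_twoScaleDom.measurableSet] with r hr
  exact hM _ (cellPoint_mem_Icc N hr)

theorem mem_closure_twoScaleDom {a : ℝ} (ha : a ∈ Icc (0 : ℝ) 1) :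
    (a, 0) ∈ closure twoScaleDom := by
  rw [twoScaleDom, closure_prod_eq, closure_Ioo zero_ne_one, closure_Ioo (by norm_num)]
  exact ⟨ha, by norm_num⟩

theorem fourth_block_macroscopic_boundary_condition_general
    {u : ℕ → ℝ → ℝ} (hu : ∀ N, ContDiff ℝ 1 (u N)) {K : ℝ}
    (hK : ∀ N, ∫ x in Ioo (0 : ℝ) 1, deriv (u N) x ^ 2 ≤ K)
    {u0 : ℝ × ℝ → ℝ} (hu0 : MemLp u0 2 (volume.restrict twoScaleDom))
    (hweak : TendstoWeaklyL2 (volume.restrict twoScaleDom) atTop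
      (fun N p => twoScale N (u N) p.1 p.2) u0)
    {a b : ℝ} (ha : a ∈ Icc (0 : ℝ) 1) (hb : Tendsto (fun N => u N a) atTop (𝓝 b))
    {ub : ℝ → ℝ} (hub : ContinuousWithinAt ub (Ioo 0 1) a)
    (hu0eq : ∀ᵐ p ∂(volume.restrict twoScaleDom), u0 p = ub p.1) :
    ub a = b := by
  set μ := volume.restrict twoScaleDom
  have hF : 𝓝 (a, (0 : ℝ)) ⊓ ae μ ≤ 𝓝[twoScaleDom] (a, 0) :=
    inf_le_inf_left _ (le_principal_iff.2 (ae_restrict_mem isOpen_twoScaleDom.measurableSet))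
  have : (𝓝 (a, (0 : ℝ)) ⊓ ae μ).NeBot := neBot_nhds_inf_ae_of_mem_support
    (closure_subset_support_restrict isOpen_twoScaleDom (mem_closure_twoScaleDom ha))
  have hjoint := (tendsto_uncurry_of_integral_deriv_sq_le hu hK ha hb).comp
    (tendsto_fst.prodMk ((tendsto_cellPoint a 0).mono_left (prod_mono le_rfl hF)))
  have hu0b : Tendsto u0 (𝓝 (a, 0) ⊓ ae μ) (𝓝 b) :=
    hweak.tendsto_inf_ae (fun N => memLp_twoScale N (hu N).continuous 2) hu0 hjoint
  have hu0ub : Tendsto u0 (𝓝 (a, 0) ⊓ ae μ) (𝓝 (ub a)) := by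
    have hfst : Tendsto Prod.fst (𝓝[twoScaleDom] (a, (0 : ℝ))) (𝓝[Ioo 0 1] a) :=
      continuous_fst.continuousWithinAt.tendsto_nhdsWithin fun p hp => hp.1
    exact (hub.tendsto.comp (hfst.mono_left hF)).congr'
      ((hu0eq.filter_mono inf_le_right).mono fun p hp => hp.symm)
  exact tendsto_nhds_unique hu0ub hu0b

/-- **Fourth Block: macroscopic boundary condition.** Under the sequence
setting, if moreover `u_N(0) = u_N(1) = 0` for every `N` and `u⁰(x,y) = ū(x)`
a.e. with `ū` continuously differentiable, then `ū(0) = ū(1) = 0`. -/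
theorem fourth_block_macroscopic_boundary_condition
    (u : ℕ → ℝ → ℝ) (hu : ∀ N, ContDiff ℝ 1 (u N))
    (C : ℝ) (hC : 0 < C)
    (hbound : ∀ N : ℕ, (∫ x in Ioo (0 : ℝ) 1, (u N x) ^ 2) ≤ C ^ 2 ∧
      (∫ x in Ioo (0 : ℝ) 1, (deriv (u N) x) ^ 2) ≤ C ^ 2)
    (u0 u1 : ℝ × ℝ → ℝ)
    (hu0 : MemLp u0 2 (volume.restrict twoScaleDom))
    (hu1 : MemLp u1 2 (volume.restrict twoScaleDom))
    (hexp : ∀ v : ℝ × ℝ → ℝ, MemLp v 2 (volume.restrict twoScaleDom) →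
      Tendsto (fun N : ℕ => (N : ℝ) *
          ∫ p in twoScaleDom,
            (twoScale N (u N) p.1 p.2 - u0 p - (1 / (N : ℝ)) * u1 p) * v p)
        atTop (nhds 0))
    (η : ℝ × ℝ → ℝ) (hη : MemLp η 2 (volume.restrict twoScaleDom))
    (hweak : ∀ v : ℝ × ℝ → ℝ, MemLp v 2 (volume.restrict twoScaleDom) →
      Tendsto (fun N : ℕ =>
          ∫ p in twoScaleDom, twoScale N (deriv (u N)) p.1 p.2 * v p)
        atTop (nhds (∫ p in twoScaleDom, η p * v p)))
    (hbv : ∀ N : ℕ, u N 0 = 0 ∧ u N 1 = 0)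
    (ub : ℝ → ℝ) (hub : ContDiff ℝ 1 ub)
    (hu0eq : ∀ᵐ p ∂(volume.restrict twoScaleDom), u0 p = ub p.1) :
    ub 0 = 0 ∧ ub 1 = 0 := by
  have trace {a : ℝ} (ha : a ∈ Icc (0 : ℝ) 1) (hua : ∀ N, u N a = 0) : ub a = 0 :=
    fourth_block_macroscopic_boundary_condition_general hu (fun N => (hbound N).2) hu0
      (.of_expansion (fun N => memLp_twoScale N (hu N).continuous 2) hu0 hu1 hexp) ha
      (tendsto_const_nhds.congr fun N => (hua N).symm) hub.continuous.continuousWithinAt hu0eq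
  exact ⟨trace (by simp) fun N => (hbv N).1, trace (by simp) fun N => (hbv N).2⟩
end

section
/- Sixth Block (microscopic problem): let f⁰ ∈ L²((0,1) × (−1/2,1/2)), let ū : [0,1] → ℝ be continuously differentiable, and let ũ¹ : [0,1] × ℝ → ℝ be continuous, 1-periodic in its second argument, with continuous partial derivative ∂ũ¹/∂y. Suppose the two-scale weak formulation holds: for every infinitely differentiable v⁰ : ℝ → ℝ with compact support in (0,1) and every infinitely differentiable v¹ : ℝ × ℝ → ℝ that is 1-periodic in its second argument and vanishes whenever its first argument lies outside a compact subset of (0,1), ∫∫_{(0,1)×(−1/2,1/2)} a⁰(y) (ū'(x) + (∂ũ¹/∂y)(x,y)) ((v⁰)'(x) + (∂v¹/∂y)(x,y)) dx dy = ∫∫ f⁰(x,y) v⁰(x) dx dy. Then for every x ∈ (0,1) and every y ∈ ℝ, (∂ũ¹/∂y)(x,y) = ū'(x) · (h/a⁰(y) − 1) = ū'(x) (θ¹)'(y); i.e. ũ¹ solves the microscopic problem with μ = ū'(x) and its y-derivative is ū' times that of θ¹. -/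
/-!
Testing with `v⁰ = 0` and `v¹(x, y) = φ(x) ψ(y)` and localizing in `x`, the flux
`σ(x, y) = a⁰(y) (ū'(x) + ∂ũ¹/∂y(x, y))` is orthogonal, on every cell `{x} × (-1/2, 1/2)`, to the
derivatives of smooth periodic functions. A nonconstant Fourier mode is such a derivative, so all
Fourier coefficients of `σ(x, ·)` except the zeroth vanish and `σ(x, ·)` is a constant `k`. Hence
`∂ũ¹/∂y = k / a⁰ - ū'`; as the `y`-derivative of a periodic function it has mean zero, which forces
`k = h ū'(x)`.
-/

open Set MeasureTheory Filter

/-- The harmonic mean `h = (∫_{-1/2}^{1/2} 1/a⁰)⁻¹` of `a⁰` over the unit cell. -/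
noncomputable def harmMean (a : ℝ → ℝ) : ℝ :=
  (∫ y in (-(1 / 2) : ℝ)..(1 / 2), 1 / a y)⁻¹

/-- The cell corrector `θ¹(y) = ∫₀^y (h/a⁰(s) − 1) ds`. -/
noncomputable def theta1 (a : ℝ → ℝ) (y : ℝ) : ℝ :=
  ∫ s in (0 : ℝ)..y, (harmMean a / a s - 1)

open scoped ContDiff

section PeriodicFunctions

variable {T : ℝ}

theorem eq_fourierCoeff_zero_of_fourierCoeff_eq_zero [Fact (0 < T)] {f : C(AddCircle T, ℂ)}
    (hf : ∀ n ≠ 0, fourierCoeff f n = 0) (x : AddCircle T) : f x = fourierCoeff f 0 := by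
  have hsummable : Summable (fourierCoeff f) :=
    summable_of_ne_finset_zero (s := {0}) fun n hn => hf n (by simpa using hn)
  have hsum := has_pointwise_sum_fourier_series_of_summable hsummable x
  simpa using hsum.unique (hasSum_single 0 fun n hn => by simp [hf n hn])

theorem integral_deriv_mul_ofReal_eq_zero {g : ℝ → ℝ} {c d : ℝ}
    (hg : IntervalIntegrable g volume c d)
    (h : ∀ ψ : ℝ → ℝ, ContDiff ℝ ∞ ψ → Function.Periodic ψ T → ∫ y in c..d, g y * deriv ψ y = 0)
    {ψ : ℝ → ℂ} (hψ : ContDiff ℝ ∞ ψ) (hψT : Function.Periodic ψ T) :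
    ∫ y in c..d, deriv ψ y * (g y : ℂ) = 0 := by
  have hderiv : Continuous (deriv ψ) := hψ.continuous_deriv (by simp)
  have hint : IntervalIntegrable (fun y => deriv ψ y * (g y : ℂ)) volume c d :=
    IntervalIntegrable.continuousOn_mul ⟨hg.1.ofReal, hg.2.ofReal⟩ hderiv.continuousOn
  have hproj (L : ℂ →L[ℝ] ℝ) : L (∫ y in c..d, deriv ψ y * (g y : ℂ)) = 0 := by
    rw [← L.intervalIntegral_comp_comm hint, ← h (L ∘ ψ) (L.contDiff.comp hψ) (hψT.comp L)]
    refine intervalIntegral.integral_congr fun y _ => ?_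
    have hL := (L.hasFDerivAt.comp_hasDerivAt y (hψ.differentiable (by simp) y).hasDerivAt).deriv
    simp only [hL, mul_comm (deriv ψ y), ← Complex.real_smul, map_smul, smul_eq_mul]
  exact Complex.ext (hproj Complex.reCLM) (hproj Complex.imCLM)

theorem exists_eq_const_of_integral_mul_deriv_eq_zero (hT : 0 < T) {g : ℝ → ℝ}
    (hg : Continuous g) (hgT : Function.Periodic g T) {c : ℝ}
    (h : ∀ ψ : ℝ → ℝ, ContDiff ℝ ∞ ψ → Function.Periodic ψ T →
      ∫ y in c..c + T, g y * deriv ψ y = 0) :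
    ∃ k, ∀ y, g y = k := by
  have : Fact (0 < T) := ⟨hT⟩
  let G : C(AddCircle T, ℂ) :=
    { toFun := (hgT.comp ((↑) : ℝ → ℂ)).lift
      continuous_toFun := continuous_coinduced_dom.mpr (Complex.continuous_ofReal.comp hg) }
  have hG (n : ℤ) (hn : n ≠ 0) : fourierCoeff G n = 0 := by
    let ψ : ℝ → ℂ := fun y => (T : ℂ) / (-2 * Real.pi * Complex.I * n) *
      fourier (-n) (y : AddCircle T)
    have hψ : ContDiff ℝ ∞ ψ := by
      have hofReal : ContDiff ℝ ∞ ((↑) : ℝ → ℂ) := Complex.ofRealCLM.contDiff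
      simp only [ψ, fourier_coe_apply]
      fun_prop
    have hψT : Function.Periodic ψ T := fun y => by simp only [ψ, AddCircle.coe_add_period]
    have hderiv (y : ℝ) : deriv ψ y = fourier (-n) (y : AddCircle T) :=
      (has_antideriv_at_fourier_neg ⟨hT⟩ hn y).deriv
    have hzero := integral_deriv_mul_ofReal_eq_zero (hg.intervalIntegrable _ _) h hψ hψT
    simp only [hderiv] at hzero
    rw [fourierCoeff_eq_intervalIntegral _ n c]
    exact smul_eq_zero_of_right _ hzero
  refine ⟨(fourierCoeff G 0).re, fun y => ?_⟩
  rw [← eq_fourierCoeff_zero_of_fourierCoeff_eq_zero hG y]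
  exact (Complex.ofReal_re _).symm

variable {E : Type*} [NormedAddCommGroup E] [NormedSpace ℝ E] {f f' : ℝ → E}

theorem periodic_of_hasDerivAt (hf : Function.Periodic f T) (hf' : ∀ y, HasDerivAt f (f' y) y) :
    Function.Periodic f' T := fun y => by
  have hshift := (hf' (y + T)).comp_add_const y T
  simp only [hf _] at hshift
  exact hshift.unique (hf' y)

theorem integral_period_eq_zero_of_hasDerivAt [CompleteSpace E] (hf : Function.Periodic f T)
    (hf' : ∀ y, HasDerivAt f (f' y) y) {c : ℝ} (hint : IntervalIntegrable f' volume c (c + T)) :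
    ∫ y in c..c + T, f' y = 0 := by
  rw [intervalIntegral.integral_eq_sub_of_hasDerivAt (fun y _ => hf' y) hint, hf c, sub_self]

end PeriodicFunctions

section CellProblem

variable {a : ℝ → ℝ}

theorem deriv_theta1 (ha : Continuous a) (hne : ∀ y, a y ≠ 0) (y : ℝ) :
    deriv (theta1 a) y = harmMean a / a y - 1 := by
  have hcont : Continuous fun s => harmMean a / a s - 1 := by fun_prop (disch := exact hne _)
  exact hcont.deriv_integral _ 0 y

theorem eq_mul_harmMean_of_flux_eq_const (ha : Continuous a) (hpos : ∀ y, 0 < a y) {w : ℝ → ℝ}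
    {m k : ℝ} (hflux : ∀ y, a y * (m + w y) = k)
    (hmean : ∫ y in (-(1 / 2) : ℝ)..(1 / 2), w y = 0) (y : ℝ) :
    w y = m * (harmMean a / a y - 1) := by
  have hne (y : ℝ) : a y ≠ 0 := (hpos y).ne'
  have hinv : Continuous fun y => 1 / a y := by fun_prop (disch := exact hne _)
  have hw (y : ℝ) : w y = k * (1 / a y) - m := by
    rw [← hflux y]
    field_simp [hne y]
    ring
  have hkm : k * ∫ y in (-(1 / 2) : ℝ)..(1 / 2), 1 / a y = m := by
    simp only [hw] at hmean
    rw [intervalIntegral.integral_sub ((hinv.const_mul k).intervalIntegrable _ _)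
      intervalIntegrable_const, intervalIntegral.integral_const_mul,
      intervalIntegral.integral_const, sub_eq_zero] at hmean
    rw [hmean]
    norm_num
  have hintegral_pos : 0 < ∫ y in (-(1 / 2) : ℝ)..(1 / 2), 1 / a y :=
    intervalIntegral.intervalIntegral_pos_of_pos (hinv.intervalIntegrable _ _)
      (fun y => one_div_pos.2 (hpos y)) (by norm_num)
  have hk : k = m * harmMean a := by
    rw [harmMean, ← hkm, mul_inv_cancel_right₀ hintegral_pos.ne']
  rw [hw, hk]
  ring

end CellProblem

section TwoScale

variable {E : Type*} [NormedAddCommGroup E] [NormedSpace ℝ E]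

/-- The test functions of the microscopic equation: smooth functions `v(x, y)`, `T`-periodic in
`y`, that vanish unless `x` lies in a compact subset of `U`. -/
structure IsMicroTestFunction (U : Set E) (T : ℝ) (v : E → ℝ → ℝ) : Prop where
  contDiff : ContDiff ℝ ∞ fun p : E × ℝ => v p.1 p.2
  periodic : ∀ x, Function.Periodic (v x) T
  eq_zero_off_compact : ∃ K, IsCompact K ∧ K ⊆ U ∧ ∀ x ∉ K, ∀ y, v x y = 0

theorem IsMicroTestFunction.tensor {U : Set E} {T : ℝ} {φ : E → ℝ} {ψ : ℝ → ℝ}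
    (hφ : ContDiff ℝ ∞ φ) (hφc : HasCompactSupport φ) (hφU : tsupport φ ⊆ U)
    (hψ : ContDiff ℝ ∞ ψ) (hψT : Function.Periodic ψ T) :
    IsMicroTestFunction U T fun x y => φ x * ψ y where
  contDiff := (hφ.comp contDiff_fst).mul (hψ.comp contDiff_snd)
  periodic x := hψT.comp (φ x * ·)
  eq_zero_off_compact := ⟨tsupport φ, hφc, hφU, fun x hx y => by
    rw [image_eq_zero_of_notMem_tsupport hx, zero_mul]⟩

variable [MeasurableSpace E] [BorelSpace E] [FiniteDimensional ℝ E] {ν : Measure E}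
  [IsLocallyFiniteMeasure ν] {U : Set E} {F : Type*} [NormedAddCommGroup F] [NormedSpace ℝ F]

theorem integrableOn_prod_smul_of_tsupport_subset {σ : E × ℝ → F}
    (hσ : ContinuousOn σ (U ×ˢ univ)) {φ : E → ℝ} (hφ : Continuous φ)
    (hφc : HasCompactSupport φ) (hφU : tsupport φ ⊆ U) (c d : ℝ) :
    IntegrableOn (fun p => φ p.1 • σ p) (univ ×ˢ Ioo c d) (ν.prod volume) := by
  have hcompact : IntegrableOn (fun p => φ p.1 • σ p) (tsupport φ ×ˢ Icc c d) (ν.prod volume) :=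
    ((hφ.comp continuous_fst).continuousOn.smul (hσ.mono (prod_mono hφU (subset_univ _)))
      ).integrableOn_compact (hφc.isCompact.prod isCompact_Icc)
  refine hcompact.of_forall_sdiff_eq_zero (MeasurableSet.univ.prod measurableSet_Ioo) ?_
  rintro ⟨x, y⟩ ⟨⟨-, hy⟩, hxy⟩
  have hx : x ∉ tsupport φ := fun hx => hxy ⟨hx, Ioo_subset_Icc_self hy⟩
  rw [image_eq_zero_of_notMem_tsupport hx, zero_smul]

variable [ν.IsOpenPosMeasure]

theorem eqOn_zero_of_integral_contDiff_smul_eq_zero [CompleteSpace F] (hU : IsOpen U) {f : E → F}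
    (hf : ContinuousOn f U)
    (h : ∀ φ : E → ℝ, ContDiff ℝ ∞ φ → HasCompactSupport φ → tsupport φ ⊆ U →
      ∫ x, φ x • f x ∂ν = 0) :
    EqOn f 0 U := by
  have hae : ∀ᵐ x ∂ν, x ∈ U → f x = 0 :=
    hU.ae_eq_zero_of_integral_contDiff_smul_eq_zero
      (hf.locallyIntegrableOn hU.measurableSet) h
  exact Measure.eqOn_open_of_ae_eq ((ae_restrict_iff' hU.measurableSet).2 hae) hU hf
    continuousOn_const

theorem intervalIntegral_eq_zero_of_integral_contDiff_smul_eq_zero [CompleteSpace F]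
    (hU : IsOpen U) {σ : E × ℝ → F} (hσ : ContinuousOn σ (U ×ˢ univ)) {c d : ℝ} (hcd : c ≤ d)
    (h : ∀ φ : E → ℝ, ContDiff ℝ ∞ φ → HasCompactSupport φ → tsupport φ ⊆ U →
      ∫ p in U ×ˢ Ioo c d, φ p.1 • σ p ∂ν.prod volume = 0) {x : E} (hx : x ∈ U) :
    ∫ y in c..d, σ (x, y) = 0 := by
  have hcont : ContinuousOn (fun x => ∫ y in c..d, σ (x, y)) U := by
    rw [continuousOn_iff_continuous_domRestrict]
    refine intervalIntegral.continuous_parametric_intervalIntegral_of_continuous'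
      (f := fun (x : U) y => σ (x, y)) ?_ c d
    exact hσ.comp_continuous (by fun_prop) fun p => ⟨p.1.2, mem_univ _⟩
  refine eqOn_zero_of_integral_contDiff_smul_eq_zero (ν := ν) hU hcont (fun φ hφ hφc hφU => ?_) hx
  have hint : IntegrableOn (fun p => φ p.1 • σ p) (U ×ˢ Ioo c d) (ν.prod volume) :=
    (integrableOn_prod_smul_of_tsupport_subset hσ hφ.continuous hφc hφU c d).mono_set
      (prod_mono (subset_univ _) subset_rfl)
  calc ∫ x, φ x • (∫ y in c..d, σ (x, y)) ∂ν
      = ∫ x in U, φ x • (∫ y in c..d, σ (x, y)) ∂ν :=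
        (setIntegral_eq_integral_of_forall_compl_eq_zero fun x hx =>
          smul_eq_zero_of_left (image_eq_zero_of_notMem_tsupport (notMem_subset hφU hx)) _).symm
    _ = ∫ x in U, (∫ y in Ioo c d, φ x • σ (x, y)) ∂ν := by
        simp only [intervalIntegral.integral_of_le hcd, integral_Ioc_eq_integral_Ioo,
          integral_smul]
    _ = ∫ p in U ×ˢ Ioo c d, φ p.1 • σ p ∂ν.prod volume := (setIntegral_prod _ hint).symm
    _ = 0 := h φ hφ hφc hφU

theorem exists_flux_eq_const_of_integral_mul_deriv_eq_zero (hU : IsOpen U) {T : ℝ} (hT : 0 < T)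
    {σ : E × ℝ → ℝ} (hσ : ContinuousOn σ (U ×ˢ univ))
    (hσT : ∀ x ∈ U, Function.Periodic (fun y => σ (x, y)) T) {c : ℝ}
    (hweak : ∀ v, IsMicroTestFunction U T v →
      ∫ p in U ×ˢ Ioo c (c + T), σ p * deriv (v p.1) p.2 ∂ν.prod volume = 0)
    {x : E} (hx : x ∈ U) :
    ∃ k, ∀ y, σ (x, y) = k := by
  have hslice : Continuous fun y => σ (x, y) :=
    hσ.comp_continuous (by fun_prop) fun y => ⟨hx, mem_univ y⟩
  refine exists_eq_const_of_integral_mul_deriv_eq_zero hT hslice (hσT x hx) (c := c)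
    fun ψ hψ hψT => ?_
  have hderiv : Continuous (deriv ψ) := hψ.continuous_deriv (by simp)
  refine intervalIntegral_eq_zero_of_integral_contDiff_smul_eq_zero (ν := ν)
    (σ := fun p => σ p * deriv ψ p.2) hU (hσ.mul (by fun_prop)) (by linarith)
    (fun φ hφ hφc hφU => ?_) hx
  simpa only [deriv_const_mul_field, smul_eq_mul, mul_left_comm] using
    hweak _ (IsMicroTestFunction.tensor hφ hφc hφU hψ hψT)

theorem sixth_block_microscopic_problem_general (hU : IsOpen U)
    {a : ℝ → ℝ} (ha : Continuous a) (ha_periodic : Function.Periodic a 1) (ha_pos : ∀ y, 0 < a y)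
    {m : E → ℝ} (hm : ContinuousOn m U) {u u' : E → ℝ → ℝ}
    (hu : ∀ x ∈ U, Function.Periodic (u x) 1)
    (hu' : ∀ x ∈ U, ∀ y, HasDerivAt (u x) (u' x y) y)
    (hu'_cont : ContinuousOn (fun p : E × ℝ => u' p.1 p.2) (U ×ˢ univ))
    (hweak : ∀ v, IsMicroTestFunction U 1 v →
      ∫ p in U ×ˢ Ioo (-(1 / 2) : ℝ) (1 / 2),
        a p.2 * (m p.1 + u' p.1 p.2) * deriv (v p.1) p.2 ∂ν.prod volume = 0) :
    ∀ x ∈ U, ∀ y, u' x y = m x * (harmMean a / a y - 1) ∧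
      u' x y = m x * deriv (theta1 a) y := by
  intro x hx y
  have hcell : (-(1 / 2) : ℝ) + 1 = 1 / 2 := by norm_num
  have hu'_periodic (x : E) (hx : x ∈ U) : Function.Periodic (u' x) 1 :=
    periodic_of_hasDerivAt (hu x hx) (hu' x hx)
  have hu'_slice : Continuous (u' x) :=
    hu'_cont.comp_continuous (by fun_prop) fun y => (⟨hx, mem_univ y⟩ : (x, y) ∈ U ×ˢ univ)
  have hflux_cont : ContinuousOn (fun p : E × ℝ => a p.2 * (m p.1 + u' p.1 p.2)) (U ×ˢ univ) :=
    (by fun_prop : Continuous fun p : E × ℝ => a p.2).continuousOn.mul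
      ((hm.comp continuousOn_fst fun _ hp => hp.1).add hu'_cont)
  obtain ⟨k, hk⟩ : ∃ k, ∀ y, a y * (m x + u' x y) = k :=
    exists_flux_eq_const_of_integral_mul_deriv_eq_zero hU one_pos hflux_cont
      (fun x hx y => by simp only [ha_periodic y, hu'_periodic x hx y]) (c := -(1 / 2))
      (by simpa only [hcell] using hweak) hx
  have hmean : ∫ y in (-(1 / 2) : ℝ)..(1 / 2), u' x y = 0 := by
    simpa only [hcell] using
      integral_period_eq_zero_of_hasDerivAt (hu x hx) (hu' x hx)
        (hu'_slice.intervalIntegrable (-(1 / 2)) _)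
  have hcorrector := eq_mul_harmMean_of_flux_eq_const ha ha_pos hk hmean y
  exact ⟨hcorrector, by rwa [deriv_theta1 ha fun y => (ha_pos y).ne']⟩

end TwoScale

/-- **Sixth Block: microscopic problem.** If `(ū, ũ¹)` solves the two-scale
weak formulation, with `ũ¹` continuous, 1-periodic in its second argument and
with continuous `y`-partial derivative `u1y = ∂ũ¹/∂y`, then
`∂ũ¹/∂y(x,y) = ū'(x)(h/a⁰(y) − 1) = ū'(x)(θ¹)'(y)` for all `x ∈ (0,1)`, `y ∈ ℝ`. -/
theorem sixth_block_microscopic_problem (a : ℝ → ℝ) (α β : ℝ)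
    (ha : Continuous a) (haper : ∀ y, a (y + 1) = a y)
    (hα : 0 < α) (hαβ : α ≤ β) (hbound : ∀ y, α ≤ a y ∧ a y ≤ β)
    (f0 : ℝ × ℝ → ℝ) (hf0 : MemLp f0 2 (volume.restrict twoScaleDom))
    (ub : ℝ → ℝ) (hub : ContDiff ℝ 1 ub)
    (u1 : ℝ → ℝ → ℝ) (hu1c : Continuous (fun p : ℝ × ℝ => u1 p.1 p.2))
    (hu1per : ∀ x y : ℝ, u1 x (y + 1) = u1 x y)
    (u1y : ℝ → ℝ → ℝ)
    (hu1y : ∀ x y : ℝ, HasDerivAt (fun t => u1 x t) (u1y x y) y)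
    (hu1yc : Continuous (fun p : ℝ × ℝ => u1y p.1 p.2))
    (hweak : ∀ v0 : ℝ → ℝ, ContDiff ℝ (⊤ : ℕ∞) v0 → HasCompactSupport v0 →
      tsupport v0 ⊆ Ioo (0 : ℝ) 1 →
      ∀ v1 : ℝ → ℝ → ℝ, ContDiff ℝ (⊤ : ℕ∞) (fun p : ℝ × ℝ => v1 p.1 p.2) →
        (∀ x y : ℝ, v1 x (y + 1) = v1 x y) →
        (∃ K : Set ℝ, IsCompact K ∧ K ⊆ Ioo (0 : ℝ) 1 ∧
          ∀ x ∉ K, ∀ y : ℝ, v1 x y = 0) →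
        ∫ p in twoScaleDom,
            a p.2 * (deriv ub p.1 + u1y p.1 p.2)
              * (deriv v0 p.1 + deriv (fun y => v1 p.1 y) p.2)
          = ∫ p in twoScaleDom, f0 p * v0 p.1) :
    ∀ x ∈ Ioo (0 : ℝ) 1, ∀ y : ℝ,
      u1y x y = deriv ub x * (harmMean a / a y - 1) ∧
      u1y x y = deriv ub x * deriv (theta1 a) y := by
  refine sixth_block_microscopic_problem_general (ν := volume) isOpen_Ioo ha haper
    (fun y => hα.trans_le (hbound y).1) (hub.continuous_deriv le_rfl).continuousOn
    (fun x _ => hu1per x) (fun x _ => hu1y x) hu1yc.continuousOn fun v hv => ?_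
  simpa [twoScaleDom, Measure.volume_eq_prod] using
    hweak 0 contDiff_const .zero (by simp) v hv.contDiff hv.periodic hv.eq_zero_off_compact
end
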